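/- Let p > 2 be prime and A ⊆ ZMod p with |A| = δp and δ ≥ C p^{−1/12} for a suitable absolute constant C. Then the number of pairs (x,y) ∈ (ZMod p)² with x ∈ A, x + y ∈ A, and x + y² ∈ A is at least c δ³ p² for an absolute constant c > 0. -/

import Mathlib

open Finset
open scoped ComplexConjugate

section FiniteField

variable {K : Type*} [Field K] [Fintype K] [DecidableEq K] {ψ : AddChar K ℂ}

theorem norm_sum_quadratic_sq (hψ : ψ.IsPrimitive) (h2 : (2 : K) ≠ 0) {a : K} (ha : a ≠ 0)
    (b c : K) : ‖∑ u, ψ (a * u ^ 2 + b * u + c)‖ ^ 2 = Fintype.card K := by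
  have key : ((‖∑ u, ψ (a * u ^ 2 + b * u + c)‖ ^ 2 : ℝ) : ℂ) = Fintype.card K := by
    rw [Complex.ofReal_pow, ← Complex.conj_mul', map_sum, Finset.sum_mul_sum]
    calc ∑ u, ∑ w, conj (ψ (a * u ^ 2 + b * u + c)) * ψ (a * w ^ 2 + b * w + c)
        = ∑ u, ∑ t, ψ (a * t ^ 2 + b * t) * ψ (u * (2 * a * t)) := by
          refine sum_congr rfl fun u _ => ?_
          rw [← Equiv.sum_comp (Equiv.addLeft u)]
          refine sum_congr rfl fun t _ => ?_
          rw [← AddChar.map_neg_eq_conj, ← AddChar.map_add_eq_mul, ← AddChar.map_add_eq_mul]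
          congr 1
          simp only [Equiv.coe_addLeft]
          ring
      _ = ∑ t, ψ (a * t ^ 2 + b * t) * ∑ u, ψ (u * (2 * a * t)) := by
          rw [sum_comm]
          simp only [mul_sum]
      _ = Fintype.card K := by
          simp [AddChar.sum_mulShift _ hψ, ha, h2]
  exact_mod_cast key

theorem norm_bilinear_sq_le {α β : Type*} [Fintype α] [Fintype β] (k : α → β → ℂ) {R : ℝ}
    (hR : ∀ v, ∑ v', ‖∑ u, k u v * conj (k u v')‖ ≤ R) (Φ : α → ℂ) (Ψ : β → ℂ) :
    ‖∑ u, ∑ v, Φ u * Ψ v * k u v‖ ^ 2 ≤ R * (∑ u, ‖Φ u‖ ^ 2) * ∑ v, ‖Ψ v‖ ^ 2 := by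
  set M : β → β → ℝ := fun v v' => ‖∑ u, k u v * conj (k u v')‖ with hM
  have hsymm : ∀ v v', M v v' = M v' v := fun v v' => by
    simp only [hM]
    rw [← Complex.norm_conj, map_sum]
    simp [mul_comm]
  have hTT : ∑ u, ‖∑ v, Ψ v * k u v‖ ^ 2 ≤ R * ∑ v, ‖Ψ v‖ ^ 2 := by
    have e : ((∑ u, ‖∑ v, Ψ v * k u v‖ ^ 2 : ℝ) : ℂ)
        = ∑ v, ∑ v', Ψ v * conj (Ψ v') * ∑ u, k u v * conj (k u v') := by
      push_cast
      simp_rw [← Complex.mul_conj', map_sum, Finset.sum_mul_sum, mul_sum]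
      rw [sum_comm]
      refine sum_congr rfl fun v _ => ?_
      rw [sum_comm]
      refine sum_congr rfl fun v' _ => sum_congr rfl fun u _ => ?_
      rw [map_mul]; ring
    have hn : ∑ u, ‖∑ v, Ψ v * k u v‖ ^ 2
        = ‖∑ v, ∑ v', Ψ v * conj (Ψ v') * ∑ u, k u v * conj (k u v')‖ := by
      rw [← e, Complex.norm_real, Real.norm_of_nonneg (by positivity)]
    have hrow : ∑ v, ∑ v', ‖Ψ v‖ ^ 2 * M v v' ≤ R * ∑ v, ‖Ψ v‖ ^ 2 := by
      rw [mul_sum]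
      refine sum_le_sum fun v _ => ?_
      rw [← mul_sum, mul_comm]
      exact mul_le_mul_of_nonneg_right (hR v) (by positivity)
    have hcol : ∑ v, ∑ v', ‖Ψ v'‖ ^ 2 * M v v' = ∑ v, ∑ v', ‖Ψ v‖ ^ 2 * M v v' := by
      rw [sum_comm]
      simp_rw [hsymm]
    calc ∑ u, ‖∑ v, Ψ v * k u v‖ ^ 2
        ≤ ∑ v, ∑ v', (‖Ψ v‖ ^ 2 * M v v' + ‖Ψ v'‖ ^ 2 * M v v') / 2 := by
          rw [hn]
          refine (norm_sum_le _ _).trans (sum_le_sum fun v _ =>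
            (norm_sum_le _ _).trans (sum_le_sum fun v' _ => ?_))
          rw [norm_mul, norm_mul, Complex.norm_conj]
          have h0 : 0 ≤ M v v' := norm_nonneg _
          change ‖Ψ v‖ * ‖Ψ v'‖ * M v v' ≤ _
          nlinarith [mul_nonneg h0 (sq_nonneg (‖Ψ v‖ - ‖Ψ v'‖))]
      _ = (∑ v, ∑ v', ‖Ψ v‖ ^ 2 * M v v' + ∑ v, ∑ v', ‖Ψ v'‖ ^ 2 * M v v') / 2 := by
          simp_rw [← sum_div, sum_add_distrib]
      _ ≤ R * ∑ v, ‖Ψ v‖ ^ 2 := by rw [hcol]; linarith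
  calc ‖∑ u, ∑ v, Φ u * Ψ v * k u v‖ ^ 2
      ≤ (∑ u, ‖Φ u‖ * ‖∑ v, Ψ v * k u v‖) ^ 2 := by
        gcongr
        refine (norm_sum_le _ _).trans (sum_le_sum fun u _ => ?_)
        rw [← norm_mul, mul_sum]
        simp only [mul_assoc, le_refl]
    _ ≤ (∑ u, ‖Φ u‖ ^ 2) * ∑ u, ‖∑ v, Ψ v * k u v‖ ^ 2 := sum_mul_sq_le_sq_mul_sq _ _ _
    _ ≤ (∑ u, ‖Φ u‖ ^ 2) * (R * ∑ v, ‖Ψ v‖ ^ 2) := by gcongr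
    _ = _ := by ring

/-- The Gauss sum `∑ y, ψ (m * y + n * y ^ 2)`, set to zero at the degenerate frequency `n = 0`. -/
noncomputable def parabolaSum (ψ : AddChar K ℂ) (m n : K) : ℂ :=
  if n = 0 then 0 else ∑ y, ψ (m * y + n * y ^ 2)

theorem parabolaSum_eq (h2 : (2 : K) ≠ 0) {n : K} (hn : n ≠ 0) (m : K) :
    parabolaSum ψ m n = parabolaSum ψ 0 n * ψ (-(m ^ 2 / (4 * n))) := by
  have h4 : (4 : K) ≠ 0 := by
    have : (4 : K) = 2 * 2 := by norm_num
    rw [this]; exact mul_ne_zero h2 h2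
  simp only [parabolaSum, if_neg hn, sum_mul]
  rw [← Equiv.sum_comp (Equiv.subRight (m / (2 * n)))]
  refine sum_congr rfl fun y _ => ?_
  rw [← AddChar.map_add_eq_mul]
  congr 1
  simp only [Equiv.subRight_apply]
  have : (4 : K) = 2 * 2 := by norm_num
  rw [this]
  field_simp
  ring

theorem norm_parabolaSum_sq (hψ : ψ.IsPrimitive) (h2 : (2 : K) ≠ 0) {n : K} (hn : n ≠ 0)
    (m : K) : ‖parabolaSum ψ m n‖ ^ 2 = Fintype.card K := by
  rw [← norm_sum_quadratic_sq hψ h2 hn m 0, parabolaSum, if_neg hn]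
  simp only [add_zero, add_comm (n * _ ^ 2)]

theorem norm_parabolaSum_sq_le (hψ : ψ.IsPrimitive) (h2 : (2 : K) ≠ 0) (m n : K) :
    ‖parabolaSum ψ m n‖ ^ 2 ≤ Fintype.card K := by
  by_cases hn : n = 0
  · simp [parabolaSum, hn]
  · exact (norm_parabolaSum_sq hψ h2 hn m).le

theorem norm_parabolaSum_le (hψ : ψ.IsPrimitive) (h2 : (2 : K) ≠ 0) (m n : K) :
    ‖parabolaSum ψ m n‖ ≤ √(Fintype.card K) :=
  Real.le_sqrt_of_sq_le (norm_parabolaSum_sq_le hψ h2 m n)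

/-- The kernel obtained by differencing `parabolaSum` along the direction `(-h, h)`. -/
noncomputable def diffKernel (ψ : AddChar K ℂ) (h u v : K) : ℂ :=
  parabolaSum ψ u v * conj (parabolaSum ψ (u - h) (v + h))

theorem norm_diffKernel_le (hψ : ψ.IsPrimitive) (h2 : (2 : K) ≠ 0) (h u v : K) :
    ‖diffKernel ψ h u v‖ ≤ Fintype.card K := by
  rw [diffKernel, norm_mul, Complex.norm_conj]
  calc _ ≤ √(Fintype.card K : ℝ) * √(Fintype.card K : ℝ) := by
        gcongr <;> exact norm_parabolaSum_le hψ h2 _ _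
    _ = _ := Real.mul_self_sqrt (by positivity)

theorem norm_sum_diffKernel_le (hψ : ψ.IsPrimitive) (h2 : (2 : K) ≠ 0) (h v v' : K) :
    ‖∑ u, diffKernel ψ h u v * conj (diffKernel ψ h u v')‖ ≤ (Fintype.card K : ℝ) ^ 3 := by
  calc _ ≤ ∑ _u : K, (Fintype.card K : ℝ) * Fintype.card K := by
        refine (norm_sum_le _ _).trans (sum_le_sum fun u _ => ?_)
        rw [norm_mul, Complex.norm_conj]
        gcongr <;> exact norm_diffKernel_le hψ h2 _ _ _
    _ = _ := by simp; ring

theorem norm_sum_diffKernel_le_of_ne (hψ : ψ.IsPrimitive) (h2 : (2 : K) ≠ 0) {h v v' : K}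
    (hh : h ≠ 0) (h₁ : v' ≠ v) (hadd : v + v' + h ≠ 0) :
    ‖∑ u, diffKernel ψ h u v * conj (diffKernel ψ h u v')‖
      ≤ (Fintype.card K : ℝ) ^ 2 * √(Fintype.card K) := by
  by_cases hv : v = 0
  · simp [diffKernel, parabolaSum, hv]; positivity
  by_cases hvh : v + h = 0
  · simp [diffKernel, parabolaSum, hvh]; positivity
  by_cases hv' : v' = 0
  · simp [diffKernel, parabolaSum, hv']; positivity
  by_cases hvh' : v' + h = 0
  · simp [diffKernel, parabolaSum, hvh']; positivity
  have h4 : (4 : K) ≠ 0 := by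
    have : (4 : K) = 2 * 2 := by norm_num
    rw [this]; exact mul_ne_zero h2 h2
  set a : K := -(1 / (4 * v)) + 1 / (4 * (v + h)) + 1 / (4 * v') - 1 / (4 * (v' + h)) with ha
  have ha0 : a ≠ 0 := by
    have : a * (4 * v * (v + h) * v' * (v' + h)) = h * ((v - v') * (v + v' + h)) := by
      rw [ha]; field_simp; ring
    intro h0
    rw [h0, zero_mul] at this
    exact mul_ne_zero hh (mul_ne_zero (sub_ne_zero.2 h₁.symm) hadd) this.symm
  have e : ∑ u, diffKernel ψ h u v * conj (diffKernel ψ h u v')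
      = diffKernel ψ h h v * conj (diffKernel ψ h h v') *
        (∑ u, ψ (a * u ^ 2 + (-(2 * h) / (4 * (v + h)) + 2 * h / (4 * (v' + h))) * u
          + (h ^ 2 / (4 * v) - h ^ 2 / (4 * v') + h ^ 2 / (4 * (v + h))
              - h ^ 2 / (4 * (v' + h))))) := by
    rw [mul_sum]
    refine sum_congr rfl fun u _ => ?_
    simp only [diffKernel]
    rw [parabolaSum_eq h2 hv, parabolaSum_eq h2 hvh, parabolaSum_eq h2 hv', parabolaSum_eq h2 hvh',
      parabolaSum_eq h2 hv h, parabolaSum_eq h2 hv' h]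
    simp only [map_mul, ← AddChar.map_neg_eq_conj, sub_self, Complex.conj_conj, neg_neg]
    have : ψ (-(u ^ 2 / (4 * v))) * ψ ((u - h) ^ 2 / (4 * (v + h))) *
        (ψ (u ^ 2 / (4 * v')) * ψ (-((u - h) ^ 2 / (4 * (v' + h)))))
        = ψ (-(h ^ 2 / (4 * v))) * ψ (h ^ 2 / (4 * v')) *
        ψ (a * u ^ 2 + (-(2 * h) / (4 * (v + h)) + 2 * h / (4 * (v' + h))) * u
          + (h ^ 2 / (4 * v) - h ^ 2 / (4 * v') + h ^ 2 / (4 * (v + h))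
              - h ^ 2 / (4 * (v' + h)))) := by
      simp only [← AddChar.map_add_eq_mul]
      congr 1
      rw [ha]; ring
    linear_combination (parabolaSum ψ 0 v * conj (parabolaSum ψ 0 (v + h)) *
      conj (parabolaSum ψ 0 v') * parabolaSum ψ 0 (v' + h)) * this
  rw [e, norm_mul, norm_mul, Complex.norm_conj, pow_two (Fintype.card K : ℝ)]
  gcongr
  · exact norm_diffKernel_le hψ h2 _ _ _
  · exact norm_diffKernel_le hψ h2 _ _ _
  · exact Real.le_sqrt_of_sq_le (norm_sum_quadratic_sq hψ h2 ha0 _ _).le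

theorem sum_norm_sum_diffKernel_le (hψ : ψ.IsPrimitive) (h2 : (2 : K) ≠ 0) {h : K}
    (hh : h ≠ 0) (v : K) :
    ∑ v', ‖∑ u, diffKernel ψ h u v * conj (diffKernel ψ h u v')‖
      ≤ 3 * ((Fintype.card K : ℝ) ^ 3 * √(Fintype.card K)) := by
  set q : ℝ := (Fintype.card K : ℝ) with hq
  have hq1 : 1 ≤ q := Nat.one_le_cast.2 Fintype.card_pos
  have hs : 1 ≤ √q := Real.one_le_sqrt.2 hq1
  calc _ ≤ ∑ v' : K, (q ^ 2 * √q + (if v' = v then q ^ 3 else 0)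
          + (if v' = -v - h then q ^ 3 else 0)) := by
        refine sum_le_sum fun v' _ => ?_
        have h3 := norm_sum_diffKernel_le hψ h2 h v v'
        have hp : 0 ≤ q ^ 2 * √q := by positivity
        have hp3 : 0 ≤ q ^ 3 := by positivity
        by_cases h₁ : v' = v
        · rw [if_pos h₁]; split_ifs <;> linarith
        by_cases h₂ : v' = -v - h
        · rw [if_pos h₂, if_neg h₁]; linarith
        rw [if_neg h₁, if_neg h₂, add_zero, add_zero]
        refine norm_sum_diffKernel_le_of_ne hψ h2 hh h₁ fun h0 => h₂ ?_
        linear_combination h0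
    _ = q ^ 3 * √q + 2 * q ^ 3 := by
        simp [sum_add_distrib, ← hq]; ring
    _ ≤ 3 * (q ^ 3 * √q) := by nlinarith [pow_pos (zero_lt_one.trans_le hq1) 3]

theorem sum_norm_sq_convolution {G : Type*} [AddCommGroup G] [Fintype G] (W : G → G → ℂ) :
    ((∑ k, ‖∑ n, W (k - n) n‖ ^ 2 : ℝ) : ℂ)
      = ∑ h, ∑ u, ∑ v, W u v * conj (W (u - h) (v + h)) := by
  push_cast
  simp_rw [← Complex.mul_conj', map_sum, Finset.sum_mul_sum]
  calc ∑ k, ∑ n, ∑ n', W (k - n) n * conj (W (k - n') n')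
      = ∑ k, ∑ n, ∑ h, W (k - n) n * conj (W (k - n - h) (n + h)) := by
        refine sum_congr rfl fun k _ => sum_congr rfl fun n _ => ?_
        rw [← Equiv.sum_comp (Equiv.addLeft n)]
        simp [sub_sub]
    _ = ∑ n, ∑ u, ∑ h, W u n * conj (W (u - h) (n + h)) := by
        rw [sum_comm]
        refine sum_congr rfl fun n _ => ?_
        exact Equiv.sum_comp (Equiv.subRight n)
          fun u => ∑ h, W u n * conj (W (u - h) (n + h))
    _ = _ := by
        simp_rw [sum_comm (s := univ) (t := univ)
          (f := fun u h => W u _ * conj (W (u - h) (_ + h)))]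
        rw [sum_comm]
        exact sum_congr rfl fun h _ => sum_comm

theorem sum_norm_sq_parabola_le (hψ : ψ.IsPrimitive) (h2 : (2 : K) ≠ 0) (F : K → ℂ) :
    ∑ k, ‖∑ n, F (k - n) * F n * parabolaSum ψ (k - n) n‖ ^ 2
      ≤ (Fintype.card K + √(3 * ((Fintype.card K : ℝ) ^ 3 * √(Fintype.card K))))
        * (∑ k, ‖F k‖ ^ 2) ^ 2 := by
  set q : ℝ := (Fintype.card K : ℝ) with hq
  set R : ℝ := 3 * (q ^ 3 * √q)
  set D : K → ℝ := fun h => ∑ u, ‖F u * conj (F (u - h))‖ ^ 2 with hD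
  have hDsum : ∑ h, D h = (∑ k, ‖F k‖ ^ 2) ^ 2 := by
    simp only [hD]
    rw [sum_comm, sq, sum_mul]
    refine sum_congr rfl fun u _ => ?_
    rw [mul_sum, ← Equiv.sum_comp (Equiv.subLeft u)]
    simp [mul_pow]
  have hD' : ∀ h, ∑ v, ‖F v * conj (F (v + h))‖ ^ 2 = D h := fun h => by
    simp only [hD]
    rw [← Equiv.sum_comp (Equiv.subRight h)]
    simp [mul_comm]
  have hterm : ∀ h, ‖∑ u, ∑ v, (F u * F v * parabolaSum ψ u v) *
      conj (F (u - h) * F (v + h) * parabolaSum ψ (u - h) (v + h))‖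
      ≤ (if h = 0 then q * (∑ k, ‖F k‖ ^ 2) ^ 2 else 0) + √R * D h := fun h => by
    have hDn : 0 ≤ D h := by positivity
    by_cases hh : h = 0
    · rw [if_pos hh]
      refine le_add_of_le_of_nonneg ?_ (by positivity)
      rw [sq, sum_mul_sum, mul_sum]
      refine (norm_sum_le _ _).trans (sum_le_sum fun u _ => ?_)
      rw [mul_sum]
      refine (norm_sum_le _ _).trans (sum_le_sum fun v _ => ?_)
      rw [hh, sub_zero, add_zero, norm_mul, Complex.norm_conj, norm_mul, norm_mul]
      have := norm_parabolaSum_sq_le hψ h2 u v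
      calc _ = ‖parabolaSum ψ u v‖ ^ 2 * (‖F u‖ ^ 2 * ‖F v‖ ^ 2) := by ring
        _ ≤ _ := by gcongr
    · rw [if_neg hh, zero_add]
      have := norm_bilinear_sq_le (diffKernel ψ h) (sum_norm_sum_diffKernel_le hψ h2 hh)
        (fun u => F u * conj (F (u - h))) (fun v => F v * conj (F (v + h)))
      rw [hD' h] at this
      refine le_of_sq_le_sq ?_ (by positivity)
      rw [mul_pow, Real.sq_sqrt (by positivity), sq (D h), ← mul_assoc]
      refine le_of_eq_of_le ?_ this
      congr 2
      refine sum_congr rfl fun u _ => sum_congr rfl fun v _ => ?_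
      simp only [diffKernel, map_mul]
      ring
  calc _ = ‖((∑ k, ‖∑ n, F (k - n) * F n * parabolaSum ψ (k - n) n‖ ^ 2 : ℝ) : ℂ)‖ := by
        rw [Complex.norm_real, Real.norm_of_nonneg (by positivity)]
    _ ≤ ∑ h, ((if h = 0 then q * (∑ k, ‖F k‖ ^ 2) ^ 2 else 0) + √R * D h) := by
        rw [sum_norm_sq_convolution fun u v => F u * F v * parabolaSum ψ u v]
        exact (norm_sum_le _ _).trans (sum_le_sum fun h _ => hterm h)
    _ = _ := by
        rw [sum_add_distrib, ← mul_sum, hDsum]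
        simp
        ring

/-- The Fourier transform with respect to `ψ`, unnormalized. -/
noncomputable def charTransform (ψ : AddChar K ℂ) (f : K → ℂ) (n : K) : ℂ :=
  ∑ x, f x * ψ (-(x * n))

theorem charTransform_inversion (hψ : ψ.IsPrimitive) (f : K → ℂ) (x : K) :
    ∑ n, charTransform ψ f n * ψ (n * x) = Fintype.card K * f x := by
  simp only [charTransform, sum_mul]
  rw [sum_comm]
  calc _ = ∑ z, f z * ∑ n, ψ (n * (x - z)) := by
        refine sum_congr rfl fun z _ => ?_
        rw [mul_sum]
        refine sum_congr rfl fun n _ => ?_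
        rw [mul_assoc, ← AddChar.map_add_eq_mul]
        congr 2
        ring
    _ = _ := by
        simp [AddChar.sum_mulShift _ hψ, sub_eq_zero, mul_comm]

theorem charTransform_parseval (hψ : ψ.IsPrimitive) (f : K → ℂ) :
    ∑ n, ‖charTransform ψ f n‖ ^ 2 = Fintype.card K * ∑ x, ‖f x‖ ^ 2 := by
  have key : ((∑ n, ‖charTransform ψ f n‖ ^ 2 : ℝ) : ℂ)
      = ((Fintype.card K * ∑ x, ‖f x‖ ^ 2 : ℝ) : ℂ) := by
    push_cast
    simp_rw [← Complex.mul_conj', mul_sum]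
    calc _ = ∑ x, conj (f x) * ∑ n, charTransform ψ f n * ψ (n * x) := by
          simp_rw [mul_sum]
          rw [sum_comm]
          refine sum_congr rfl fun n _ => ?_
          rw [show conj (charTransform ψ f n) = ∑ x, conj (f x * ψ (-(x * n))) from
            map_sum _ _ _, mul_sum]
          refine sum_congr rfl fun x _ => ?_
          rw [map_mul, ← AddChar.map_neg_eq_conj, neg_neg, mul_comm n x]
          ring
      _ = _ := by
          refine sum_congr rfl fun x _ => ?_
          rw [charTransform_inversion hψ]; ring
  exact_mod_cast key

theorem card_sq_mul_sum_parabola (hψ : ψ.IsPrimitive) (f : K → ℂ) :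
    (Fintype.card K : ℂ) ^ 2 * ∑ x, ∑ y, f x * f (x + y) * f (x + y ^ 2)
      = Fintype.card K * (∑ x, f x) ^ 3 + ∑ k, charTransform ψ f (-k) *
        ∑ n, charTransform ψ f (k - n) * charTransform ψ f n * parabolaSum ψ (k - n) n := by
  set F := charTransform ψ f with hF
  have hgauss : ∀ m n : K, ∑ y, ψ (m * y + n * y ^ 2)
      = parabolaSum ψ m n + if n = 0 then (if m = 0 then (Fintype.card K : ℂ) else 0) else 0 := by
    intro m n
    by_cases hn : n = 0
    · simp [parabolaSum, hn, mul_comm m, AddChar.sum_mulShift _ hψ]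
    · simp [parabolaSum, hn]
  have hF0 : F 0 = ∑ x, f x := by simp [hF, charTransform]
  calc _ = ∑ x, ∑ y, f x * (Fintype.card K * f (x + y)) * (Fintype.card K * f (x + y ^ 2)) := by
        simp_rw [mul_sum]
        refine sum_congr rfl fun x _ => sum_congr rfl fun y _ => ?_
        ring
    _ = ∑ x, ∑ y, ∑ n, ∑ m, F m * F n * (f x * ψ (-(x * -(m + n)))) * ψ (m * y + n * y ^ 2) := by
        refine sum_congr rfl fun x _ => sum_congr rfl fun y _ => ?_
        rw [← charTransform_inversion hψ, ← charTransform_inversion hψ, mul_assoc, sum_mul_sum,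
          sum_comm, mul_sum]
        refine sum_congr rfl fun n _ => ?_
        rw [mul_sum]
        refine sum_congr rfl fun m _ => ?_
        have : ψ (m * (x + y)) * ψ (n * (x + y ^ 2))
            = ψ (-(x * -(m + n))) * ψ (m * y + n * y ^ 2) := by
          simp only [← AddChar.map_add_eq_mul]
          congr 1; ring
        linear_combination f x * F m * F n * this
    _ = ∑ n, ∑ m, F m * F n * F (-(m + n)) * ∑ y, ψ (m * y + n * y ^ 2) := by
        have : ∀ n m, F m * F n * F (-(m + n)) * ∑ y, ψ (m * y + n * y ^ 2)
            = ∑ x, ∑ y, F m * F n * (f x * ψ (-(x * -(m + n)))) * ψ (m * y + n * y ^ 2) := by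
          intro n m
          rw [show F (-(m + n)) = ∑ x, f x * ψ (-(x * -(m + n))) from rfl,
            mul_sum (s := univ) (f := fun x => f x * _), sum_mul_sum]
        simp_rw [this]
        calc _ = ∑ x, ∑ n, ∑ m, ∑ y,
              F m * F n * (f x * ψ (-(x * -(m + n)))) * ψ (m * y + n * y ^ 2) := by
              refine sum_congr rfl fun x _ => ?_
              rw [sum_comm]
              exact sum_congr rfl fun n _ => sum_comm
          _ = _ := by
              rw [sum_comm]
              exact sum_congr rfl fun n _ => sum_comm
    _ = Fintype.card K * F 0 ^ 3 + ∑ n, ∑ m, F m * F n * F (-(m + n)) * parabolaSum ψ m n := by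
        simp_rw [hgauss, mul_add, sum_add_distrib]
        rw [add_comm]
        congr 1
        simp
        ring
    _ = _ := by
        rw [hF0]
        congr 1
        simp_rw [mul_sum]
        rw [sum_comm (γ := K) (s := univ) (t := univ)
          (f := fun k n => F (-k) * (F (k - n) * F n * parabolaSum ψ (k - n) n))]
        refine sum_congr rfl fun n _ => ?_
        rw [← Equiv.sum_comp (Equiv.subRight n)]
        refine sum_congr rfl fun k _ => ?_
        simp only [Equiv.subRight_apply, sub_add_cancel]
        ring

theorem norm_sum_parabola_sub_sq_le (hψ : ψ.IsPrimitive) (h2 : (2 : K) ≠ 0) (f : K → ℂ) :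
    ‖(Fintype.card K : ℂ) ^ 2 * ∑ x, ∑ y, f x * f (x + y) * f (x + y ^ 2)
        - Fintype.card K * (∑ x, f x) ^ 3‖ ^ 2
      ≤ (Fintype.card K + √(3 * ((Fintype.card K : ℝ) ^ 3 * √(Fintype.card K))))
        * (Fintype.card K * ∑ x, ‖f x‖ ^ 2) ^ 3 := by
  rw [card_sq_mul_sum_parabola hψ, add_sub_cancel_left]
  set F := charTransform ψ f
  calc _ ≤ (∑ k, ‖F (-k)‖ * ‖∑ n, F (k - n) * F n * parabolaSum ψ (k - n) n‖) ^ 2 := by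
        gcongr
        refine (norm_sum_le _ _).trans_eq ?_
        simp only [norm_mul]
    _ ≤ (∑ k, ‖F (-k)‖ ^ 2) * ∑ k, ‖∑ n, F (k - n) * F n * parabolaSum ψ (k - n) n‖ ^ 2 :=
        sum_mul_sq_le_sq_mul_sq _ _ _
    _ ≤ (∑ k, ‖F k‖ ^ 2) *
        ((Fintype.card K + √(3 * ((Fintype.card K : ℝ) ^ 3 * √(Fintype.card K))))
          * (∑ k, ‖F k‖ ^ 2) ^ 2) := by
        rw [show ∑ k, ‖F (-k)‖ ^ 2 = ∑ k, ‖F k‖ ^ 2 from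
          Equiv.sum_comp (Equiv.neg K) fun k => ‖F k‖ ^ 2]
        gcongr
        exact sum_norm_sq_parabola_le hψ h2 F
    _ = _ := by
        rw [charTransform_parseval hψ]; ring

theorem sq_card_parabola_sub_le (h2 : (2 : K) ≠ 0) (hψ : ψ.IsPrimitive) (A : Finset K) :
    ((Fintype.card K : ℝ) ^ 2 * #{xy : K × K | xy.1 ∈ A ∧ xy.1 + xy.2 ∈ A ∧ xy.1 + xy.2 ^ 2 ∈ A}
        - Fintype.card K * (#A : ℝ) ^ 3) ^ 2
      ≤ (Fintype.card K + √(3 * ((Fintype.card K : ℝ) ^ 3 * √(Fintype.card K))))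
        * (Fintype.card K * #A) ^ 3 := by
  have key := norm_sum_parabola_sub_sq_le hψ h2 fun x => if x ∈ A then 1 else 0
  have hcount : ∑ x : K, ∑ y : K, (if x ∈ A then (1 : ℂ) else 0) * (if x + y ∈ A then 1 else 0) *
      (if x + y ^ 2 ∈ A then 1 else 0)
      = (#{xy : K × K | xy.1 ∈ A ∧ xy.1 + xy.2 ∈ A ∧ xy.1 + xy.2 ^ 2 ∈ A} : ℂ) := by
    rw [← Fintype.sum_prod_type' (f := fun x y : K => (if x ∈ A then (1 : ℂ) else 0) *
      (if x + y ∈ A then 1 else 0) * (if x + y ^ 2 ∈ A then 1 else 0)), ← sum_boole]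
    refine sum_congr rfl fun xy _ => ?_
    simp only [← ite_and, mul_ite, mul_one, mul_zero]
    split_ifs <;> simp_all
  have hA : ∑ x, (if x ∈ A then (1 : ℂ) else 0) = #A := by simp
  have hA' : ∑ x, ‖(if x ∈ A then (1 : ℂ) else 0)‖ ^ 2 = (#A : ℝ) := by
    simp [apply_ite (fun z : ℂ => ‖z‖ ^ 2)]
  rw [hcount, hA, hA'] at key
  refine le_of_eq_of_le ?_ key
  rw [← sq_abs, ← Real.norm_eq_abs, ← Complex.norm_real]
  push_cast
  rfl

end FiniteField

/-- Roth-type theorem for `x, x+y, x+y²`: there are absolute constants `C, c > 0` such that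
for every prime `p > 2` and every `A ⊆ ZMod p` with `|A| = δp` and `δ ≥ C p^{−1/12}`,
the number of pairs `(x,y)` with `x, x+y, x+y² ∈ A` is at least `c δ³ p²`. -/
theorem parabola_roth :
    ∃ C c : ℝ, 0 < C ∧ 0 < c ∧
      ∀ (p : ℕ) [Fact p.Prime], 2 < p →
        ∀ (A : Finset (ZMod p)) (δ : ℝ), (A.card : ℝ) = δ * p →
          δ ≥ C * (p : ℝ) ^ (-(1/12 : ℝ)) →
          ((Finset.univ.filter fun xy : ZMod p × ZMod p =>
              xy.1 ∈ A ∧ xy.1 + xy.2 ∈ A ∧ xy.1 + xy.2 ^ 2 ∈ A).card : ℝ)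
            ≥ c * δ ^ 3 * (p : ℝ) ^ 2 := by
  refine ⟨3, 1 / 2, by norm_num, by norm_num, fun p _ hp A δ hA hδ => ?_⟩
  have h2 : (2 : ZMod p) ≠ 0 := fun h => by
    have h' : ((2 : ℕ) : ZMod p) = 0 := by exact_mod_cast h
    exact absurd (Nat.le_of_dvd two_pos ((ZMod.natCast_eq_zero_iff 2 p).1 h')) (by omega)
  have key := sq_card_parabola_sub_le h2 (ZMod.isPrimitive_stdAddChar p) A
  rw [ZMod.card, hA] at key
  set N : ℝ := ((Finset.univ.filter fun xy : ZMod p × ZMod p =>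
    xy.1 ∈ A ∧ xy.1 + xy.2 ∈ A ∧ xy.1 + xy.2 ^ 2 ∈ A).card : ℝ)
  have hp0 : (0 : ℝ) < p := by positivity
  have hp1 : (1 : ℝ) ≤ p := by exact_mod_cast (show 1 ≤ p by omega)
  obtain ⟨t, ht1, htp, htδ⟩ : ∃ t : ℝ, 1 ≤ t ∧ (p : ℝ) = t ^ 4 ∧ 27 ≤ δ ^ 3 * t := by
    refine ⟨(p : ℝ) ^ (1 / 4 : ℝ), Real.one_le_rpow hp1 (by norm_num), ?_, ?_⟩
    · rw [← Real.rpow_mul_natCast hp0.le]; norm_num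
    · calc (27 : ℝ) = (3 * (p : ℝ) ^ (-(1 / 12 : ℝ))) ^ 3 * (p : ℝ) ^ (1 / 4 : ℝ) := by
            rw [mul_pow, ← Real.rpow_mul_natCast hp0.le, mul_assoc, ← Real.rpow_add hp0]
            norm_num
        _ ≤ _ := by gcongr
  have hδ0 : 0 < δ := lt_of_lt_of_le (by positivity) hδ
  have ht0 : 0 < t := by linarith
  have hsqrt : √(t ^ 4) = t ^ 2 := by
    rw [show t ^ 4 = (t ^ 2) ^ 2 by ring, Real.sqrt_sq (by positivity)]
  have hR : √(3 * ((t ^ 4) ^ 3 * √(t ^ 4))) ≤ 2 * t ^ 7 := by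
    rw [hsqrt]
    refine Real.sqrt_le_iff.2 ⟨by positivity, ?_⟩
    nlinarith [pow_pos ht0 14]
  have ht7 : t ^ 4 ≤ t ^ 7 := pow_le_pow_right₀ ht1 (by norm_num)
  rw [htp] at key ⊢
  by_contra! hN
  have hlow : (t ^ 16 * δ ^ 3 / 2) ^ 2 ≤
      ((t ^ 4) ^ 2 * N - t ^ 4 * (δ * t ^ 4) ^ 3) ^ 2 := by
    rw [← neg_sq ((t ^ 4) ^ 2 * N - _)]
    refine pow_le_pow_left₀ (by positivity) ?_ 2
    nlinarith [mul_le_mul_of_nonneg_left hN.le (by positivity : 0 ≤ t ^ 8)]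
  have hup : (t ^ 4 + √(3 * ((t ^ 4) ^ 3 * √(t ^ 4)))) * (t ^ 4 * (δ * t ^ 4)) ^ 3
      ≤ 3 * t ^ 7 * (t ^ 4 * (δ * t ^ 4)) ^ 3 := by
    gcongr
    linarith
  have hpos : 0 < t ^ 31 * δ ^ 3 := by positivity
  nlinarith [mul_le_mul_of_nonneg_left htδ hpos.le]
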